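/- Let f ∈ ℚ_2[x] be a nonzero polynomial. If σ_{ℚ_2}(f) = 0 then f has at most 1 root in ℚ_2, and if σ_{ℚ_2}(f) ≤ 1 then f has at most 3 distinct roots in ℚ_2. -/

import Mathlib

open Polynomial

/-- `f` admits a presentation of additive complexity `s` over `L`. -/
def HasAddComplexityPres {L : Type*} [Field L] (f : L[X]) (s : ℕ) : Prop :=
  ∃ (c d : ℕ → L) (m m' : ℕ → ℕ → ℕ) (Xs : ℕ → L[X]),
    Xs 0 = X ∧
    (∀ j, 1 ≤ j → j ≤ s →
      Xs j = C (c j) * ∏ i ∈ Finset.range j, Xs i ^ m i j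
           + C (d j) * ∏ i ∈ Finset.range j, Xs i ^ m' i j) ∧
    f = C (c (s+1)) * ∏ i ∈ Finset.range (s+1), Xs i ^ m i (s+1)

/-- The additive complexity `σ_L(f)`: the least `s` admitting such a presentation. -/
noncomputable def addComplexity {L : Type*} [Field L] (f : L[X]) : ℕ :=
  sInf {s | HasAddComplexityPres f s}

lemma pres_mul_X {L : Type*} [Field L] (p : L[X]) (h : ∃ s, HasAddComplexityPres p s) :
    ∃ s, HasAddComplexityPres (p * X) s := by
  obtain ⟨s, c, d, m, m', Xs, h0, h1, h2⟩ := h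
  refine ⟨s, c, d, fun i j => if j = s + 1 ∧ i = 0 then m i j + 1 else m i j, m', Xs, h0, ?_, ?_⟩
  · intro j hj hjs
    have : j ≠ s + 1 := by omega
    simp only [this, false_and, if_false]
    exact h1 j hj hjs
  · rw [h2, Finset.prod_range_succ', Finset.prod_range_succ']
    simp [h0, pow_succ]
    ring

lemma pres_add_C {L : Type*} [Field L] (p : L[X]) (a : L)
    (h : ∃ s, HasAddComplexityPres p s) :
    ∃ s, HasAddComplexityPres (p + C a) s := by
  obtain ⟨s, c, d, m, m', Xs, h0, h1, h2⟩ := h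
  refine ⟨s + 1, fun j => if j = s + 2 then 1 else c j, fun j => if j = s + 1 then a else d j,
    fun i j => if j = s + 2 then (if i = s + 1 then 1 else 0) else m i j,
    fun i j => if j = s + 1 then 0 else m' i j,
    fun j => if j = s + 1 then p + C a else Xs j, ?_, ?_, ?_⟩
  · simp [h0]
  · intro j hj hjs
    have h3 : j ≠ s + 2 := by omega
    have e : ∀ g : ℕ → ℕ, ∏ i ∈ Finset.range j, (if i = s + 1 then p + C a else Xs i) ^ g i
        = ∏ i ∈ Finset.range j, Xs i ^ g i := by
      intro g
      refine Finset.prod_congr rfl fun i hi => ?_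
      rw [Finset.mem_range] at hi
      rw [if_neg (by omega)]
    simp only [h3, if_false]
    rw [e, e]
    by_cases h4 : j = s + 1
    · subst h4
      simp [← h2]
    · simp only [h4, if_false]
      exact h1 j hj (by omega)
  · rw [Finset.prod_range_succ, Finset.prod_eq_one]
    · simp
    · intro i hi
      rw [Finset.mem_range] at hi
      have : i ≠ s + 1 := by omega
      simp [this]

lemma exists_pres {L : Type*} [Field L] (p : L[X]) : ∃ s, HasAddComplexityPres p s := by
  classical
  induction p using Polynomial.recOnHorner with
  | M0 => exact ⟨0, 0, 0, 0, 0, fun _ => X, rfl, by intro j h1 h2; omega, by simp⟩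
  | MC p a _ _ ih => exact pres_add_C p a ih
  | MX p _ ih => exact pres_mul_X p ih

lemma padicInt_root_unity (n : ℕ) : 0 < n → ∀ x : ℤ_[2], x ^ n = 1 → x = 1 ∨ x = -1 := by
  induction n using Nat.strong_induction_on with
  | _ n ih =>
    intro hn x hx
    rcases Nat.even_or_odd' n with ⟨k, rfl | hk⟩
    · rw [pow_mul] at hx
      rcases ih k (by omega) (by omega) _ hx with h | h
      · exact (sq_eq_sq_iff_eq_or_eq_neg (b := (1 : ℤ_[2]))).mp (by rw [h, one_pow])
      · exfalso
        have h' := congrArg (PadicInt.toZModPow (p := 2) 2) h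
        rw [map_pow, map_neg, map_one] at h'
        revert h'
        generalize (PadicInt.toZModPow (p := 2) 2) x = y
        revert y
        decide
    · left
      have h1 : PadicInt.toZMod x = 1 := by
        have h' := congrArg (PadicInt.toZMod (p := 2)) hx
        rw [map_pow, map_one] at h'
        have : ∀ y : ZMod 2, y = 0 ∨ y = 1 := by decide
        rcases this (PadicInt.toZMod x) with h | h
        · rw [h, zero_pow (by omega)] at h'
          exact absurd h' (by decide)
        · exact h
      have h2 := mul_geom_sum x n
      rw [hx, sub_self, mul_eq_zero] at h2
      rcases h2 with h2 | h2
      · exact sub_eq_zero.mp h2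
      · exfalso
        have h' := congrArg (PadicInt.toZMod (p := 2)) h2
        rw [map_sum] at h'
        simp only [map_pow, h1, one_pow, map_zero] at h'
        have h2' : (2 : ZMod 2) = 0 := by decide
        simp [hk, h2'] at h'

lemma padic_root_unity (n : ℕ) (hn : 0 < n) (x : ℚ_[2]) (hx : x ^ n = 1) : x = 1 ∨ x = -1 := by
  have hnorm : ‖x‖ = 1 := by
    have : ‖x‖ ^ n = 1 := by rw [← norm_pow, hx, norm_one]
    exact (pow_eq_one_iff_of_nonneg (norm_nonneg _) (by omega)).mp this
  have := padicInt_root_unity n hn ⟨x, hnorm.le⟩ (by apply Subtype.ext; exact (PadicInt.coe_pow _ _).trans hx)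
  rcases this with h | h
  · left; simpa using congrArg (Subtype.val) h
  · right; simpa using congrArg (Subtype.val) h

lemma ratio_aux (a b x y : ℚ_[2]) (k l : ℕ) (hkl : l < k) (ha : a ≠ 0)
    (hx0 : x ≠ 0) (hy0 : y ≠ 0)
    (hx : a * x ^ k + b * x ^ l = 0) (hy : a * y ^ k + b * y ^ l = 0) :
    x = y ∨ x = -y := by
  obtain ⟨t, rfl⟩ := Nat.exists_eq_add_of_lt hkl
  have key : ∀ z : ℚ_[2], z ≠ 0 → a * z ^ (l + t + 1) + b * z ^ l = 0 → a * z ^ (t + 1) = - b := by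
    intro z hz h
    have : z ^ l * (a * z ^ (t + 1) + b) = 0 := by rw [← h]; ring
    rcases mul_eq_zero.mp this with h | h
    · exact absurd h (pow_ne_zero _ hz)
    · exact eq_neg_of_add_eq_zero_left h
  have h1 : x ^ (t + 1) = y ^ (t + 1) :=
    mul_left_cancel₀ ha ((key x hx0 hx).trans (key y hy0 hy).symm)
  have h2 : (x / y) ^ (t + 1) = 1 := by
    rw [div_pow, h1, div_self (pow_ne_zero _ hy0)]
  rcases padic_root_unity _ (by omega) _ h2 with h | h
  · left; rw [div_eq_iff hy0] at h; simpa using h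
  · right; rw [div_eq_iff hy0] at h; simpa using h

lemma binomial_aux (a b x y : ℚ_[2]) (k l : ℕ)
    (hne : C a * X ^ k + C b * X ^ l ≠ (0 : ℚ_[2][X])) (hx0 : x ≠ 0) (hy0 : y ≠ 0)
    (hx : a * x ^ k + b * x ^ l = 0) (hy : a * y ^ k + b * y ^ l = 0) :
    x = y ∨ x = -y := by
  by_cases ha : a = 0
  · subst ha
    have : b = 0 := by simpa [hx0] using hx
    simp [this] at hne
  by_cases hb : b = 0
  · subst hb
    exact absurd hx (by simp [ha, hx0])
  rcases lt_trichotomy k l with h | h | h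
  · exact ratio_aux b a x y l k h hb hx0 hy0 (by rw [add_comm]; exact hx)
      (by rw [add_comm]; exact hy)
  · subst h
    rw [← add_mul] at hx
    have : a + b = 0 := by simpa [hx0] using hx
    rw [← add_mul, ← C_add, this] at hne
    simp at hne
  · exact ratio_aux a b x y k l h ha hx0 hy0 hx hy

lemma zero_case (f : Polynomial ℚ_[2]) (hf : f ≠ 0) (h : HasAddComplexityPres f 0) :
    {x : ℚ_[2] | f.eval x = 0}.ncard ≤ 1 := by
  obtain ⟨c, d, m, m', Xs, h0, h1, h2⟩ := h
  have hs : {x : ℚ_[2] | f.eval x = 0} ⊆ {0} := by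
    intro x hx
    simp only [Set.mem_ofPred_eq] at hx
    have hc : c 1 ≠ 0 := by rintro h; simp [h] at h2; exact hf h2
    simp [h2, h0, hc] at hx
    exact hx.1
  exact (Set.ncard_le_ncard hs).trans (by simp)

lemma one_case (f : Polynomial ℚ_[2]) (hf : f ≠ 0) (h : HasAddComplexityPres f 1) :
    {x : ℚ_[2] | f.eval x = 0}.ncard ≤ 3 := by
  obtain ⟨c, d, m, m', Xs, h0, h1, h2⟩ := h
  have h3 := h1 1 le_rfl le_rfl
  simp only [Finset.prod_range_one, h0] at h3
  have hc : c 2 ≠ 0 := by rintro h; simp [h] at h2; exact hf h2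
  have key : ∀ x : ℚ_[2], f.eval x = 0 → x ≠ 0 →
      Xs 1 ≠ 0 ∧ c 1 * x ^ m 0 1 + d 1 * x ^ m' 0 1 = 0 := by
    intro x hx hx0
    simp [h2, Finset.prod_range_succ, h0, hc, hx0] at hx
    refine ⟨?_, ?_⟩
    · intro h
      apply hf
      rw [h2]
      simp [Finset.prod_range_succ, h, hx.2]
    · have := hx.1
      rw [h3] at this
      simpa using this
  classical
  by_cases hy : ∃ y : ℚ_[2], f.eval y = 0 ∧ y ≠ 0
  · obtain ⟨y, hy, hy0⟩ := hy
    have hs : {x : ℚ_[2] | f.eval x = 0} ⊆ (({0, y, -y} : Finset ℚ_[2]) : Set ℚ_[2]) := by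
      intro x hx
      by_cases hx0 : x = 0
      · simp [hx0]
      · obtain ⟨hn, e1⟩ := key x hx hx0
        obtain ⟨_, e2⟩ := key y hy hy0
        rw [h3] at hn
        have := binomial_aux _ _ x y _ _ hn hx0 hy0 e1 e2
        simp [hx0, this]
    refine (Set.ncard_le_ncard hs (Finset.finite_toSet _)).trans ?_
    rw [Set.ncard_coe_finset]
    exact Finset.card_le_three
  · push Not at hy
    have hs : {x : ℚ_[2] | f.eval x = 0} ⊆ {0} := fun x hx => hy x hx
    exact (Set.ncard_le_ncard hs).trans (by simp)

theorem twoadic_root_count_sigma_le_one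
    (f : Polynomial ℚ_[2]) (hf : f ≠ 0) :
    (addComplexity f = 0 → {x : ℚ_[2] | f.eval x = 0}.ncard ≤ 1) ∧
    (addComplexity f ≤ 1 → {x : ℚ_[2] | f.eval x = 0}.ncard ≤ 3) := by
  have hmem : HasAddComplexityPres f (addComplexity f) :=
    Nat.sInf_mem (s := {s | HasAddComplexityPres f s}) (exists_pres f)
  constructor
  · intro h
    rw [h] at hmem
    exact zero_case f hf hmem
  · intro h
    rcases Nat.le_one_iff_eq_zero_or_eq_one.mp h with h | h
    · rw [h] at hmem
      exact (zero_case f hf hmem).trans (by norm_num)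
    · rw [h] at hmem
      exact one_case f hf hmem
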